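/- Fix ε ∈ (1/2, 1). There exist ρ ∈ (0,1) and c > 0 such that the following holds for every sequence (β_n) with β_n ≥ n·2^{nε}: if X ∼ N(0, I_n), σ* is a global minimizer of H over B_n, and I₁, I₂, I₃ are defined from σ* and ρ as in the context, then with probability tending to 1 as n → ∞, min{ π_{β_n}(I₁), π_{β_n}(I₃) } ≥ exp(c·β_n·2^{−nε}) · π_{β_n}(I₂). -/

import Mathlib

/-!
Write `a = 2 ^ (-n ε)` and `r` for the overlap of two configurations. Call a configuration a
near-minimizer at level `a` if its energy is at most `a`. Two events, each of probability
tending to `1`, suffice.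

* No two near-minimizers at level `3a` have overlap in `[ρ, 1 - 2/n]` (`tendsto_measure_badSet`).
  For a given pair the probability is `O(√n a²)` (`pair_prob`): the sums of `σᵢ Xᵢ` over the
  coordinates where the two configurations agree and differ are independent Gaussians, so the
  joint density is explicit. A Chernoff bound (`chernoff_card`) shows that there are at most
  `2 ^ n K ^ n` such pairs, and `K` can be taken smaller than `2 ^ (2ε - 1)` by choosing `ρ` close
  to `1`; this is where `ε > 1/2` is used.

* At least three near-minimizers at level `a` exist (`tendsto_measure_lowConfigs`). Their expected
  number is of order `2 ^ (n (1 - ε))`, which diverges because `ε < 1`, and the second moment method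
  applies since pair probabilities exceed their independent value by a factor `1 + √n r²` at most,
  up to `exp (a²)`, while `r²` averages to `1 / n`.

On both events (`well_of_good`), one of the three near-minimizers differs from `± σ*`; by the first
event and the symmetry `σ ↦ -σ` of the energy its overlap with `σ*` lies in `[-ρ, ρ]`. Hence `I₁` and
`{σ*}` both have weight at least `exp (-β a)`. All configurations in `I₂` have energy above `3a`, so
`I₂` has weight at most `2 ^ n exp (-3 β a) ≤ exp (-2 β a)`, using `n ≤ β a`. This gives `c = 1`.
-/

open MeasureTheory ProbabilityTheory Filter

/-- The standard Gaussian measure `N(0, I_n)` on `ℝ^n`. -/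
noncomputable def stdGaussian (n : ℕ) : Measure (Fin n → ℝ) :=
  Measure.pi fun _ => gaussianReal 0 1

/-- Membership in the binary cube `B_n = {-1,1}^n`. -/
def isCube {n : ℕ} (σ : Fin n → ℝ) : Prop := ∀ i, σ i = 1 ∨ σ i = -1

/-- The standard inner product on `ℝ^n`. -/
noncomputable def ip {n : ℕ} (x y : Fin n → ℝ) : ℝ := ∑ i, x i * y i

/-- The spin configuration in `{-1,1}^n ⊂ ℝ^n` encoded by a Boolean vector. -/
noncomputable def spin {n : ℕ} (s : Fin n → Bool) : Fin n → ℝ :=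
  fun i => if s i then 1 else -1

/-- The Gibbs weight `exp(-β·H(σ))` with `H(σ) = |⟨σ, X⟩|/√n`. -/
noncomputable def gibbsWeight (n : ℕ) (b : ℝ) (X : Fin n → ℝ) (s : Fin n → Bool) : ℝ :=
  Real.exp (-b * (|ip (spin s) X| / Real.sqrt n))

/-- The partition function `Z_β`. -/
noncomputable def gibbsZ (n : ℕ) (b : ℝ) (X : Fin n → ℝ) : ℝ :=
  ∑ s : Fin n → Bool, gibbsWeight n b X s

open Classical in
/-- The Gibbs probability `π_β(S)` of a set `S` of spin configurations. -/
noncomputable def gibbsProb (n : ℕ) (b : ℝ) (X : Fin n → ℝ) (S : Set (Fin n → ℝ)) : ℝ :=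
  (∑ s : Fin n → Bool, if spin s ∈ S then gibbsWeight n b X s else 0) / gibbsZ n b X

/-- The set `I₁ = {σ ∈ B_n : -ρ ≤ ⟨σ,σ*⟩/n ≤ ρ}`. -/
def setI1 (n : ℕ) (ρ : ℝ) (σs : Fin n → ℝ) : Set (Fin n → ℝ) :=
  {σ | isCube σ ∧ -ρ ≤ ip σ σs / n ∧ ip σ σs / n ≤ ρ}

/-- The set `I₂ = {σ ∈ B_n : ρ ≤ ⟨σ,σ*⟩/n ≤ (n-2)/n}`. -/
def setI2 (n : ℕ) (ρ : ℝ) (σs : Fin n → ℝ) : Set (Fin n → ℝ) :=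
  {σ | isCube σ ∧ ρ ≤ ip σ σs / n ∧ ip σ σs / n ≤ ((n : ℝ) - 2) / n}

/-! ### Gaussian estimates -/

instance stdGaussian_isProb (n : ℕ) : IsProbabilityMeasure (_root_.stdGaussian n) := by
  unfold _root_.stdGaussian; infer_instance

lemma spin_sq {n : ℕ} (s : Fin n → Bool) (i : Fin n) : spin s i ^ 2 = 1 := by
  unfold spin; split <;> norm_num

lemma iIndepFun_spin {n : ℕ} (s : Fin n → Bool) :
    iIndepFun (fun (i : Fin n) (X : Fin n → ℝ) => spin s i * X i) (_root_.stdGaussian n) := by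
  have := iIndepFun_pi (μ := fun _ : Fin n => gaussianReal 0 1)
    (X := fun i (x : ℝ) => spin s i * x) (fun i => by fun_prop)
  exact this

lemma map_coord_spin {n : ℕ} (s : Fin n → Bool) (i : Fin n) :
    (_root_.stdGaussian n).map (fun X => spin s i * X i) = gaussianReal 0 1 := by
  have h1 : (_root_.stdGaussian n).map (fun X => X i) = gaussianReal 0 1 :=
    (measurePreserving_eval (fun _ : Fin n => gaussianReal 0 1) i).map_eq
  have h2 := gaussianReal_map_const_mul (μ := 0) (v := 1) (spin s i)
  rw [← h1, Measure.map_map (by fun_prop) (by fun_prop)] at h2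
  have h3 : NNReal.mk (spin s i ^ 2) (sq_nonneg _) * 1 = 1 := by
    ext; simp [spin_sq]
  simp only [mul_zero] at h2
  rw [h3] at h2
  exact h2

lemma map_sum_spin {n : ℕ} (s : Fin n → Bool) (A : Finset (Fin n)) :
    (_root_.stdGaussian n).map (fun X => ∑ i ∈ A, spin s i * X i)
      = gaussianReal 0 (A.card : NNReal) := by
  induction A using Finset.induction_on with
  | empty =>
    simp [Measure.map_const]
  | insert i A hi ih =>
    have hind : IndepFun (fun X => ∑ i ∈ A, spin s i * X i) (fun X => spin s i * X i)
        (_root_.stdGaussian n) := by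
      have := (iIndepFun_spin s).indepFun_finsetSum_of_notMem (fun i => by fun_prop) hi
      convert this using 1
      ext X; simp
    have := gaussianReal_add_gaussianReal_of_indepFun hind ih (map_coord_spin s i)
    simp only [Finset.sum_insert hi, Finset.card_insert_of_notMem hi]
    rw [zero_add] at this
    push_cast
    rw [← this]
    congr 1
    ext X; simp [add_comm]

lemma map_ip_spin {n : ℕ} (s : Fin n → Bool) :
    (_root_.stdGaussian n).map (fun X => ip (spin s) X) = gaussianReal 0 (n : NNReal) := by
  have := map_sum_spin s Finset.univ
  simpa [ip] using this

lemma map_pair_spin {n : ℕ} (s : Fin n → Bool) (A : Finset (Fin n)) :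
    (_root_.stdGaussian n).map
      (fun X => (∑ i ∈ A, spin s i * X i, ∑ i ∈ Aᶜ, spin s i * X i))
      = (gaussianReal 0 (A.card : NNReal)).prod (gaussianReal 0 ((Aᶜ).card : NNReal)) := by
  have h := (iIndepFun_spin s).indepFun_finset A Aᶜ disjoint_compl_right (fun i => by fun_prop)
  have h2 := h.comp (φ := fun x : A → ℝ => ∑ i, x i) (ψ := fun x : (Aᶜ : Finset _) → ℝ => ∑ i, x i)
    (by fun_prop) (by fun_prop)
  have e (B : Finset (Fin n)) : ((fun x : B → ℝ => ∑ i, x i) ∘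
      fun (a : Fin n → ℝ) (i : B) => spin s i * a i) = fun X => ∑ i ∈ B, spin s i * X i := by
    ext X
    simp only [Function.comp]
    exact Finset.sum_coe_sort B (fun i => spin s i * X i)
  have h3 := h2.map_prod_eq_prod_map_map (Measurable.aemeasurable (by rw [e]; fun_prop))
    (Measurable.aemeasurable (by rw [e]; fun_prop))
  rw [← map_sum_spin s A, ← map_sum_spin s Aᶜ]
  rw [e, e] at h3
  rw [← h3]

lemma gaussianReal_le_smul_volume {v : NNReal} (hv : v ≠ 0) :
    gaussianReal 0 v ≤ ENNReal.ofReal ((√(2 * Real.pi * v))⁻¹) • (volume : Measure ℝ) := by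
  rw [gaussianReal_of_var_ne_zero _ hv, ← withDensity_const]
  refine withDensity_mono (ae_of_all _ fun x => ?_)
  refine ENNReal.ofReal_le_ofReal ?_
  rw [gaussianPDFReal]
  refine mul_le_of_le_one_right (by positivity) ?_
  rw [Real.exp_le_one_iff]
  have : 0 ≤ (x - 0) ^ 2 / (2 * (v : ℝ)) := by positivity
  rw [neg_div]; linarith

/-- Interval length times the minimum of the density on the interval. -/
lemma gaussian_lower {v : NNReal} (hv : v ≠ 0) (b : ℝ) :
    2 * b * ((√(2 * Real.pi * v))⁻¹ * Real.exp (-b ^ 2 / (2 * v))) ≤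
      (gaussianReal 0 v).real {x | |x| ≤ b} := by
  have hset : {x : ℝ | |x| ≤ b} = Set.Icc (-b) b := by
    ext x; simp [abs_le]
  rw [measureReal_def, ← ENNReal.ofReal_le_iff_le_toReal (measure_ne_top _ _), hset,
    gaussianReal_apply _ hv]
  calc ENNReal.ofReal (2 * b * ((√(2 * Real.pi * v))⁻¹ * Real.exp (-b ^ 2 / (2 * v))))
      = ∫⁻ _ in Set.Icc (-b) b,
          ENNReal.ofReal ((√(2 * Real.pi * v))⁻¹ * Real.exp (-b ^ 2 / (2 * v))) := by
        rw [setLIntegral_const, Real.volume_Icc, ← ENNReal.ofReal_mul (by positivity)]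
        congr 1; ring
    _ ≤ _ := by
        refine setLIntegral_mono' measurableSet_Icc fun x hx => ?_
        refine ENNReal.ofReal_le_ofReal ?_
        rw [gaussianPDFReal]
        refine mul_le_mul_of_nonneg_left ?_ (by positivity)
        refine Real.exp_le_exp.2 (div_le_div_of_nonneg_right ?_ (by positivity))
        have := sq_le_sq' hx.1 hx.2
        rw [sub_zero]; linarith

lemma lintegral_tent {b : ℝ} (hb : 0 ≤ b) :
    ∫⁻ x : ℝ, ENNReal.ofReal (2 * (b - |x|)) = ENNReal.ofReal (2 * b ^ 2) := by
  have h0 : ∫⁻ x : ℝ, ENNReal.ofReal (2 * (b - |x|)) =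
      ∫⁻ x in Set.Icc (-b) b, ENNReal.ofReal (2 * (b - |x|)) := by
    rw [← lintegral_indicator measurableSet_Icc]
    refine lintegral_congr fun x => ?_
    by_cases hx : x ∈ Set.Icc (-b) b
    · simp [hx]
    · rw [Set.indicator_of_notMem hx, ENNReal.ofReal_eq_zero]
      have : ¬ |x| ≤ b := by rwa [abs_le]
      linarith
  rw [h0, ← ofReal_integral_eq_lintegral_ofReal]
  · congr 1
    rw [integral_Icc_eq_integral_Ioc, ← intervalIntegral.integral_of_le (by linarith)]
    rw [← intervalIntegral.integral_add_adjacent_intervals (b := 0)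
      (Continuous.intervalIntegrable (by fun_prop) _ _)
      (Continuous.intervalIntegrable (by fun_prop) _ _)]
    have e1 : ∫ x in (-b)..0, 2 * (b - |x|) = ∫ x in (-b)..0, (2 * b + 2 * x) := by
      refine intervalIntegral.integral_congr fun x hx => ?_
      rw [Set.uIcc_of_le (by linarith)] at hx
      simp only [abs_of_nonpos hx.2]; ring
    have e2 : ∫ x in (0)..b, 2 * (b - |x|) = ∫ x in (0)..b, (2 * b - 2 * x) := by
      refine intervalIntegral.integral_congr fun x hx => ?_
      rw [Set.uIcc_of_le (by linarith)] at hx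
      simp only [abs_of_nonneg hx.1]; ring
    rw [e1, e2, intervalIntegral.integral_add, intervalIntegral.integral_sub]
    · have h (p q : ℝ) : ∫ x in p..q, 2 * x = q ^ 2 - p ^ 2 := by
        rw [intervalIntegral.integral_const_mul, integral_id]; ring
      rw [h, h, intervalIntegral.integral_const, intervalIntegral.integral_const]
      simp only [smul_eq_mul]; ring
    all_goals exact Continuous.intervalIntegrable (by fun_prop) _ _
  · exact (Continuous.continuousOn (by fun_prop)).integrableOn_Icc
  · refine (ae_restrict_iff' measurableSet_Icc).2 (ae_of_all _ fun x hx => ?_)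
    have := abs_le.2 hx
    simp only [Pi.zero_apply]; linarith

/-- For independent centred Gaussians with variances `v`, `w`: the square-shaped region
`|x| + |y| ≤ b` has area `2b²`, and the joint density is at most `1 / (2π√(vw))`. -/
lemma gaussian_prod_upper {v w : NNReal} (hv : v ≠ 0) (hw : w ≠ 0) {b : ℝ} (hb : 0 ≤ b) :
    ((gaussianReal 0 v).prod (gaussianReal 0 w)).real
      {p | |p.1 + p.2| ≤ b ∧ |p.1 - p.2| ≤ b} ≤ b ^ 2 / (Real.pi * √(v * w)) := by
  have hms : MeasurableSet {p : ℝ × ℝ | |p.1 + p.2| ≤ b ∧ |p.1 - p.2| ≤ b} :=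
    MeasurableSet.inter (s₁ := {p : ℝ × ℝ | |p.1 + p.2| ≤ b}) (s₂ := {p : ℝ × ℝ | |p.1 - p.2| ≤ b})
      (measurableSet_le (by fun_prop) (by fun_prop))
      (measurableSet_le (by fun_prop) (by fun_prop))
  refine ENNReal.toReal_le_of_le_ofReal (by positivity) ?_
  rw [Measure.prod_apply hms]
  set c := (√(2 * Real.pi * v))⁻¹
  set d := (√(2 * Real.pi * w))⁻¹
  calc ∫⁻ x, (gaussianReal 0 w) (Prod.mk x ⁻¹' {p | |p.1 + p.2| ≤ b ∧ |p.1 - p.2| ≤ b})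
        ∂(gaussianReal 0 v)
      ≤ ∫⁻ x, ENNReal.ofReal d * ENNReal.ofReal (2 * (b - |x|)) ∂(gaussianReal 0 v) := by
        refine lintegral_mono fun x => ?_
        refine (gaussianReal_le_smul_volume hw _).trans ?_
        rw [Measure.smul_apply, smul_eq_mul]
        gcongr
        refine (measure_mono (t := Set.Icc (-(b - |x|)) (b - |x|)) ?_).trans ?_
        · intro y hy
          simp only [Set.mem_preimage, Set.mem_ofPred_eq, abs_le] at hy
          obtain ⟨⟨h1, h2⟩, h3, h4⟩ := hy
          rw [Set.mem_Icc]
          rcases abs_cases x with ⟨h, _⟩ | ⟨h, _⟩ <;> rw [h] <;> constructor <;> linarith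
        · rw [Real.volume_Icc]
          exact ENNReal.ofReal_le_ofReal (by linarith)
    _ ≤ ∫⁻ x, ENNReal.ofReal d * ENNReal.ofReal (2 * (b - |x|))
          ∂(ENNReal.ofReal c • (volume : Measure ℝ)) :=
        lintegral_mono' (gaussianReal_le_smul_volume hv) le_rfl
    _ = ENNReal.ofReal (c * (d * (2 * b ^ 2))) := by
        rw [lintegral_smul_measure, lintegral_const_mul _ (by fun_prop), lintegral_tent hb,
          ← ENNReal.ofReal_mul (by positivity), smul_eq_mul, ← ENNReal.ofReal_mul (by positivity)]
    _ = _ := by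
        congr 1
        have hv' : (0 : ℝ) < v := by exact_mod_cast pos_iff_ne_zero.2 hv
        have hw' : (0 : ℝ) < w := by exact_mod_cast pos_iff_ne_zero.2 hw
        have : √(2 * Real.pi * v) * √(2 * Real.pi * w) = 2 * Real.pi * √(v * w) := by
          rw [← Real.sqrt_mul (by positivity),
            show 2 * Real.pi * v * (2 * Real.pi * w) = (2 * Real.pi) ^ 2 * (v * w) by ring,
            Real.sqrt_mul (by positivity), Real.sqrt_sq (by positivity)]
        calc c * (d * (2 * b ^ 2)) = (√(2 * Real.pi * v) * √(2 * Real.pi * w))⁻¹ * (2 * b ^ 2) := by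
              rw [mul_inv]; ring
          _ = _ := by
              rw [this]
              field_simp

/-! ### Near-minimizers and pair probabilities -/

/-- The event that `s` is a near-minimizer at level `a`, i.e. `H(spin s) ≤ a`, written
without division by `√n`. -/
def lowSet {n : ℕ} (a : ℝ) (s : Fin n → Bool) : Set (Fin n → ℝ) :=
  {X | |ip (spin s) X| ≤ a * √n}

/-- The antipodal configuration: `spin (flipAll s) = -spin s`. -/
def flipAll {n : ℕ} (s : Fin n → Bool) : Fin n → Bool := fun i => !s i

lemma spin_flipAll {n : ℕ} (s : Fin n → Bool) (i : Fin n) : spin (flipAll s) i = -spin s i := by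
  unfold spin flipAll; cases s i <;> simp

lemma ip_flipAll {n : ℕ} (s : Fin n → Bool) (X : Fin n → ℝ) :
    ip (spin (flipAll s)) X = -ip (spin s) X := by
  simp [ip, spin_flipAll]

lemma measurable_ip {n : ℕ} (s : Fin n → Bool) : Measurable (fun X => ip (spin s) X) := by
  unfold ip; fun_prop

lemma measurableSet_lowSet {n : ℕ} (a : ℝ) (s : Fin n → Bool) : MeasurableSet (lowSet a s) :=
  measurableSet_le ((measurable_ip s).abs) measurable_const

lemma measure_lowSet {n : ℕ} (a : ℝ) (s : Fin n → Bool) :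
    (_root_.stdGaussian n).real (lowSet a s) =
      (gaussianReal 0 (n : NNReal)).real {x | |x| ≤ a * √n} := by
  rw [← map_ip_spin s, measureReal_def, measureReal_def, Measure.map_apply (measurable_ip s)]
  · rfl
  · exact measurableSet_le (by fun_prop) (by fun_prop)

/-- Lower bound on the probability of `lowSet a s`: the interval length `2a` times the
standard Gaussian density at `a`. -/
lemma low_prob_lower {n : ℕ} (hn : 1 ≤ n) (a : ℝ) :
    2 * a * ((√(2 * Real.pi))⁻¹ * Real.exp (-a ^ 2 / 2)) ≤
      (gaussianReal 0 (n : NNReal)).real {x | |x| ≤ a * √n} := by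
  have hn0 : (0 : ℝ) < n := by exact_mod_cast hn
  refine le_of_eq_of_le ?_ (gaussian_lower (v := (n : NNReal)) (by exact_mod_cast hn0.ne') _)
  have e1 : -(a * √(n : ℝ)) ^ 2 / (2 * (n : NNReal)) = -a ^ 2 / 2 := by
    rw [mul_pow, Real.sq_sqrt hn0.le]; push_cast; field_simp
  rw [e1]
  push_cast
  have h : 0 < √(n : ℝ) := Real.sqrt_pos.2 hn0
  rw [Real.sqrt_mul (by positivity : (0 : ℝ) ≤ 2 * Real.pi) (n : ℝ)]
  field_simp

/-- Splitting `⟨s, X⟩` over the coordinates where `s` and `t` agree and those where they differ;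
`sum_agree'` is the same splitting of `⟨t, X⟩`, with the second block sign-flipped. -/
lemma sum_agree {n : ℕ} (s t : Fin n → Bool) (X : Fin n → ℝ) :
    ip (spin s) X = ∑ i with s i = t i, spin s i * X i
      + ∑ i ∈ (Finset.univ.filter fun i => s i = t i)ᶜ, spin s i * X i := by
  rw [Finset.sum_add_sum_compl]; rfl

lemma sum_agree' {n : ℕ} (s t : Fin n → Bool) (X : Fin n → ℝ) :
    ip (spin t) X = ∑ i with s i = t i, spin s i * X i
      - ∑ i ∈ (Finset.univ.filter fun i => s i = t i)ᶜ, spin s i * X i := by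
  rw [ip, ← Finset.sum_add_sum_compl (Finset.univ.filter fun i => s i = t i), sub_eq_add_neg,
    ← Finset.sum_neg_distrib]
  congr 1
  · refine Finset.sum_congr rfl fun i hi => ?_
    simp only [Finset.mem_filter, Finset.mem_univ, true_and] at hi
    simp [spin, hi]
  · refine Finset.sum_congr rfl fun i hi => ?_
    simp only [Finset.mem_compl, Finset.mem_filter, Finset.mem_univ, true_and] at hi
    have : t i = !s i := by revert hi; cases s i <;> cases t i <;> simp
    simp [spin, this]
    cases s i <;> simp

lemma ip_agree {n : ℕ} (s t : Fin n → Bool) :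
    ip (spin s) (spin t) = ((Finset.univ.filter fun i => s i = t i).card : ℝ)
      - ((Finset.univ.filter fun i => s i = t i)ᶜ).card := by
  have e : ip (spin s) (spin t) = ip (spin t) (spin s) := by simp [ip, mul_comm]
  rw [e, sum_agree' s t]
  have h (i : Fin n) : spin s i * spin s i = 1 := by rw [← sq, spin_sq]
  simp [h]

/-- With overlap `r = (k - m) / n`, this is `1 / √(1 - r²) ≤ 1 + √n r²`, valid because
`1 - r² ≥ 1 / n` as soon as both blocks are nonempty. -/
lemma inv_sqrt_bound {k m n : ℝ} (hk : 1 ≤ k) (hm : 1 ≤ m) (hn : k + m = n) :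
    n / (2 * √(k * m)) ≤ 1 + √n * ((k - m) / n) ^ 2 := by
  have hn0 : 0 < n := by linarith
  have hkm : 0 < k * m := by positivity
  set z := √(k * m) with hz
  have hz0 : 0 < z := Real.sqrt_pos.2 hkm
  have hz2 : z ^ 2 = k * m := Real.sq_sqrt hkm.le
  set w := √n with hw
  have hw0 : 0 < w := Real.sqrt_pos.2 hn0
  have hw2 : w ^ 2 = n := Real.sq_sqrt hn0.le
  -- `y` is `√(1 - r²)` for the overlap `r = (k - m) / n`
  obtain ⟨y, hy⟩ : ∃ y, y = 2 * z / n := ⟨_, rfl⟩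
  have hy0 : 0 < y := by rw [hy]; positivity
  have hy2 : y ^ 2 = 1 - ((k - m) / n) ^ 2 := by
    rw [hy, div_pow, mul_pow, hz2]; field_simp; rw [← hn]; ring
  have hy1 : y ≤ 1 := by
    have : y ^ 2 ≤ 1 := by rw [hy2]; nlinarith [sq_nonneg ((k - m) / n)]
    nlinarith
  have hwy : 1 ≤ w * y := by
    have : 1 ≤ (w * y) ^ 2 := by
      rw [mul_pow, hw2, hy, div_pow, mul_pow, hz2]
      rw [← hn] at hn0 ⊢
      field_simp
      nlinarith
    nlinarith [mul_pos hw0 hy0]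
  have e : n / (2 * z) = 1 / y := by rw [hy]; field_simp
  rw [e, show ((k - m) / n) ^ 2 = 1 - y ^ 2 by linarith, div_le_iff₀ hy0]
  nlinarith [mul_nonneg (sub_nonneg.2 hwy) (sub_nonneg.2 hy1),
    mul_nonneg (mul_nonneg (mul_pos hw0 hy0).le (sub_nonneg.2 hy1)) hy0.le]

/-- Two configurations that are not equal or antipodal are simultaneously near-minimizers with
probability at most `(2a²/π)(1 + √n r²)`, where `r` is their overlap. The factor `2a²/π` is the
leading-order value for independent configurations. -/
lemma pair_prob {n : ℕ} {a : ℝ} (ha : 0 ≤ a) (s t : Fin n → Bool)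
    (h1 : t ≠ s) (h2 : t ≠ flipAll s) :
    (_root_.stdGaussian n).real (lowSet a s ∩ lowSet a t) ≤
      2 * a ^ 2 / Real.pi * (1 + √n * (ip (spin s) (spin t) / n) ^ 2) := by
  set A := Finset.univ.filter fun i => s i = t i with hA
  have hk : A.Nonempty := by
    by_contra h
    apply h2
    ext i
    have : i ∉ A := by rw [Finset.not_nonempty_iff_eq_empty.1 h]; simp
    simp only [hA, Finset.mem_filter, Finset.mem_univ, true_and] at this
    unfold flipAll
    revert this; cases s i <;> cases t i <;> simp
  have hm : (Aᶜ).Nonempty := by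
    by_contra h
    apply h1
    ext i
    have : i ∉ Aᶜ := by rw [Finset.not_nonempty_iff_eq_empty.1 h]; simp
    simp only [hA, Finset.mem_compl, Finset.mem_filter, Finset.mem_univ, true_and, not_not] at this
    rw [this]
  have hk1 : (1 : ℝ) ≤ A.card := by exact_mod_cast hk.card_pos
  have hm1 : (1 : ℝ) ≤ (Aᶜ).card := by exact_mod_cast hm.card_pos
  have hn : (A.card : ℝ) + (Aᶜ).card = n := by
    have := Finset.card_add_card_compl A
    rw [Fintype.card_fin] at this
    exact_mod_cast this
  have hset : lowSet a s ∩ lowSet a t =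
      (fun X => (∑ i ∈ A, spin s i * X i, ∑ i ∈ Aᶜ, spin s i * X i)) ⁻¹'
        {p : ℝ × ℝ | |p.1 + p.2| ≤ a * √n ∧ |p.1 - p.2| ≤ a * √n} := by
    ext X
    simp only [lowSet, Set.mem_inter_iff, Set.mem_ofPred_eq, Set.mem_preimage]
    rw [sum_agree s t X, sum_agree' s t X]
  have hms : MeasurableSet {p : ℝ × ℝ | |p.1 + p.2| ≤ a * √n ∧ |p.1 - p.2| ≤ a * √n} :=
    MeasurableSet.inter (s₁ := {p : ℝ × ℝ | |p.1 + p.2| ≤ a * √n})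
      (s₂ := {p : ℝ × ℝ | |p.1 - p.2| ≤ a * √n})
      (measurableSet_le (by fun_prop) (by fun_prop))
      (measurableSet_le (by fun_prop) (by fun_prop))
  rw [hset, measureReal_def, ← Measure.map_apply (by fun_prop) hms, map_pair_spin s A,
    ← measureReal_def]
  refine (gaussian_prod_upper (by simpa using hk.ne_empty)
    (by exact_mod_cast hm.card_pos.ne') (by positivity)).trans ?_
  have := inv_sqrt_bound hk1 hm1 hn
  rw [ip_agree s t]
  push_cast
  calc (a * √n) ^ 2 / (Real.pi * √(A.card * (Aᶜ).card))
      = 2 * a ^ 2 / Real.pi * (n / (2 * √(A.card * (Aᶜ).card))) := by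
        rw [mul_pow, Real.sq_sqrt (by positivity)]
        field_simp
    _ ≤ _ := by gcongr

/-! ### Counting configurations by overlap -/

lemma sum_spin_mul {n : ℕ} (i j : Fin n) (hij : i ≠ j) :
    ∑ t : Fin n → Bool, spin t i * spin t j = 0 := by
  let f : (Fin n → Bool) → (Fin n → Bool) := fun t => Function.update t i (!t i)
  have hf : Function.Involutive f := by
    intro t; simp [f]
  have h : ∑ t, spin (f t) i * spin (f t) j = ∑ t, spin t i * spin t j :=
    Equiv.sum_comp hf.toPerm (fun t : Fin n → Bool => spin t i * spin t j)
  have h2 : ∀ t : Fin n → Bool, spin (f t) i * spin (f t) j = -(spin t i * spin t j) := by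
    intro t
    simp only [f, spin, Function.update_self, Function.update_of_ne hij.symm]
    cases t i <;> cases t j <;> simp
  simp only [h2, Finset.sum_neg_distrib] at h
  linarith

lemma sum_ip_sq {n : ℕ} (s : Fin n → Bool) :
    ∑ t : Fin n → Bool, ip (spin s) (spin t) ^ 2 = n * 2 ^ n := by
  have e : ∀ t : Fin n → Bool, ip (spin s) (spin t) ^ 2 =
      ∑ i, ∑ j, spin s i * spin s j * (spin t i * spin t j) := by
    intro t
    rw [sq, ip, Finset.sum_mul_sum]
    refine Finset.sum_congr rfl fun i _ => Finset.sum_congr rfl fun j _ => by ring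
  simp_rw [e]
  rw [Finset.sum_comm]
  have : ∀ i, ∑ t : Fin n → Bool, ∑ j, spin s i * spin s j * (spin t i * spin t j) = 2 ^ n := by
    intro i
    rw [Finset.sum_comm, Finset.sum_eq_single i]
    · have h (u : Fin n → Bool) : spin u i * spin u i = 1 := by rw [← sq, spin_sq]
      simp [h]
    · intro j _ hj
      rw [← Finset.mul_sum, sum_spin_mul i j hj.symm, mul_zero]
    · simp
  simp [this]

/-- Chernoff bound for the number of configurations with overlap at least `ρ` with `s`.
For `l` large and then `ρ` close to `1` the base of the exponential is close to `1`. -/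
lemma chernoff_card {n : ℕ} (s : Fin n → Bool) (ρ l : ℝ) (hl : 0 ≤ l) :
    (((Finset.univ : Finset (Fin n → Bool)).filter
      fun t => ρ * n ≤ ip (spin s) (spin t)).card : ℝ) ≤
      (Real.exp (l * (1 - ρ)) * (1 + Real.exp (-(2 * l)))) ^ n := by
  calc (((Finset.univ : Finset (Fin n → Bool)).filter
      fun t => ρ * n ≤ ip (spin s) (spin t)).card : ℝ)
      = ∑ t : Fin n → Bool with ρ * n ≤ ip (spin s) (spin t), (1 : ℝ) := by simp
    _ ≤ ∑ t : Fin n → Bool with ρ * n ≤ ip (spin s) (spin t),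
          Real.exp (l * (ip (spin s) (spin t) - ρ * n)) := by
        refine Finset.sum_le_sum fun t ht => ?_
        rw [Finset.mem_filter] at ht
        exact Real.one_le_exp (mul_nonneg hl (by linarith [ht.2]))
    _ ≤ ∑ t : Fin n → Bool, Real.exp (l * (ip (spin s) (spin t) - ρ * n)) :=
        Finset.sum_le_sum_of_subset_of_nonneg (Finset.filter_subset _ _)
          fun _ _ _ => (Real.exp_pos _).le
    _ = ∑ t : Fin n → Bool, ∏ i, Real.exp (l * (spin s i * (if t i then 1 else -1) - ρ)) := by
        refine Finset.sum_congr rfl fun t _ => ?_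
        rw [← Real.exp_sum]
        congr 1
        rw [← Finset.mul_sum, Finset.sum_sub_distrib]
        simp [ip, spin, mul_comm]
    _ = ∏ i : Fin n, ∑ b : Bool, Real.exp (l * (spin s i * (if b then 1 else -1) - ρ)) := by
        rw [Finset.prod_univ_sum, Fintype.piFinset_univ]
    _ = ∏ i : Fin n, Real.exp (l * (1 - ρ)) * (1 + Real.exp (-(2 * l))) := by
        refine Finset.prod_congr rfl fun i _ => ?_
        have e : Real.exp (l * (1 - ρ)) * (1 + Real.exp (-(2 * l))) =
            Real.exp (l * (1 - ρ)) + Real.exp (l * (-1 - ρ)) := by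
          rw [mul_add, ← Real.exp_add]; ring_nf
        rw [e]
        cases h : s i <;> simp [spin, h, add_comm]
    _ = _ := by simp

/-! ### Union bound over correlated pairs -/

/-- The event that two configurations with mutual overlap in the range defining `I₂`, that is between
`ρ` and `(n - 2) / n`, are both near-minimizers at level `a`. -/
def badSet (n : ℕ) (a ρ : ℝ) : Set (Fin n → ℝ) :=
  {X | ∃ s t : Fin n → Bool, ρ * n ≤ ip (spin s) (spin t) ∧ ip (spin s) (spin t) ≤ n - 2 ∧
    X ∈ lowSet a s ∩ lowSet a t}

open Classical in
/-- The configurations that are near-minimizers at level `a`. -/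
noncomputable def lowConfigs (n : ℕ) (a : ℝ) (X : Fin n → ℝ) : Finset (Fin n → Bool) :=
  Finset.univ.filter fun s => X ∈ lowSet a s

lemma ip_self {n : ℕ} (s : Fin n → Bool) : ip (spin s) (spin s) = n := by
  have h (i : Fin n) : spin s i * spin s i = 1 := by rw [← sq, spin_sq]
  simp [ip, h]

lemma ip_comm' {n : ℕ} (x y : Fin n → ℝ) : ip x y = ip y x := by
  simp [ip, mul_comm]

/-- Union bound over the pairs counted by `chernoff_card`. -/
lemma measure_badSet {n : ℕ} (hn : 1 ≤ n) {a ρ l : ℝ} (ha : 0 ≤ a) (hρ : 0 < ρ) (hl : 0 ≤ l) :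
    (_root_.stdGaussian n).real (badSet n a ρ) ≤
      2 ^ n * ((Real.exp (l * (1 - ρ)) * (1 + Real.exp (-(2 * l)))) ^ n *
        (2 * a ^ 2 / Real.pi * (1 + √n))) := by
  have hn0 : (0 : ℝ) < n := by exact_mod_cast hn
  set F : (Fin n → Bool) → Finset (Fin n → Bool) := fun s =>
    Finset.univ.filter fun t => ρ * n ≤ ip (spin s) (spin t)
  set G : (Fin n → Bool) → Finset (Fin n → Bool) := fun s =>
    (F s).filter fun t => ip (spin s) (spin t) ≤ n - 2
  have hsub : badSet n a ρ ⊆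
      ⋃ s ∈ (Finset.univ : Finset (Fin n → Bool)), ⋃ t ∈ G s, lowSet a s ∩ lowSet a t := by
    rintro X ⟨s, t, h1, h2, h3⟩
    simp only [Set.mem_iUnion]
    exact ⟨s, Finset.mem_univ _, t, by simp [G, F, h1, h2], h3⟩
  refine (measureReal_mono hsub (measure_ne_top _ _)).trans ((measureReal_biUnion_finset_le _ _).trans ?_)
  have key : ∀ s : Fin n → Bool,
      (_root_.stdGaussian n).real (⋃ t ∈ G s, lowSet a s ∩ lowSet a t) ≤
      (Real.exp (l * (1 - ρ)) * (1 + Real.exp (-(2 * l)))) ^ n *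
        (2 * a ^ 2 / Real.pi * (1 + √n)) := by
    intro s
    refine (measureReal_biUnion_finset_le _ _).trans ?_
    have hp : ∀ t ∈ G s, (_root_.stdGaussian n).real (lowSet a s ∩ lowSet a t) ≤
        2 * a ^ 2 / Real.pi * (1 + √n) := by
      intro t ht
      simp only [G, F, Finset.mem_filter, Finset.mem_univ, true_and] at ht
      obtain ⟨h1, h2⟩ := ht
      have hpos : 0 < ρ * n := by positivity
      refine (pair_prob ha s t ?_ ?_).trans ?_
      · rintro rfl
        rw [ip_self] at h2; linarith
      · rintro rfl
        rw [ip_comm', ip_flipAll, ip_self] at h1; linarith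
      · have : (ip (spin s) (spin t) / n) ^ 2 ≤ 1 := by
          have h3 : 0 ≤ ip (spin s) (spin t) / n := by
            apply div_nonneg <;> linarith
          have h4 : ip (spin s) (spin t) / n ≤ 1 := by
            rw [div_le_one hn0]; linarith
          exact pow_le_one₀ h3 h4
        gcongr
        exact mul_le_of_le_one_right (by positivity) this
    refine (Finset.sum_le_sum hp).trans ?_
    rw [Finset.sum_const, nsmul_eq_mul]
    gcongr
    refine le_trans ?_ (chernoff_card s ρ l hl)
    exact_mod_cast Finset.card_le_card (Finset.filter_subset _ _)
  refine (Finset.sum_le_sum fun s _ => key s).trans ?_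
  simp

/-! ### Second moment method for the number of near-minimizers -/

/-- Since the squared overlap with `s` averages to `1 / n`, the correction `√n r²` in `pair_prob`
contributes only a factor `1 + 1 / √n`. The last term accounts for `t = ± s`. -/
lemma sum_pair_prob {n : ℕ} (hn : 1 ≤ n) {a : ℝ} (ha : 0 ≤ a) (s : Fin n → Bool) :
    ∑ t, (_root_.stdGaussian n).real (lowSet a s ∩ lowSet a t) ≤
      2 ^ n * (2 * a ^ 2 / Real.pi * (1 + 1 / √n))
        + 2 * (gaussianReal 0 (n : NNReal)).real {x | |x| ≤ a * √n} := by
  set p := (gaussianReal 0 (n : NNReal)).real {x | |x| ≤ a * √n} with hp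
  have hp0 : 0 ≤ p := measureReal_nonneg
  have hn0 : (0 : ℝ) < n := by exact_mod_cast hn
  have h : ∀ t, (_root_.stdGaussian n).real (lowSet a s ∩ lowSet a t) ≤
      2 * a ^ 2 / Real.pi * (1 + √n * (ip (spin s) (spin t) / n) ^ 2)
        + ((if t = s then p else 0) + (if t = flipAll s then p else 0)) := by
    intro t
    have hQ : 0 ≤ 2 * a ^ 2 / Real.pi * (1 + √n * (ip (spin s) (spin t) / n) ^ 2) := by
      positivity
    have hle : (_root_.stdGaussian n).real (lowSet a s ∩ lowSet a t) ≤ p := by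
      rw [hp, ← measure_lowSet a s]
      exact measureReal_mono Set.inter_subset_left
    by_cases h1 : t = s
    · rw [if_pos h1]
      split_ifs <;> linarith
    · by_cases h2 : t = flipAll s
      · rw [if_pos h2]
        split_ifs; linarith
      · rw [if_neg h1, if_neg h2]
        linarith [pair_prob ha s t h1 h2]
  refine (Finset.sum_le_sum fun t _ => h t).trans (le_of_eq ?_)
  rw [Finset.sum_add_distrib, Finset.sum_add_distrib, Finset.sum_ite_eq', Finset.sum_ite_eq',
    ← Finset.mul_sum, Finset.sum_add_distrib, ← Finset.mul_sum]
  simp only [div_pow]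
  rw [← Finset.sum_div, sum_ip_sq]
  simp only [Finset.mem_univ, if_true, Finset.sum_const, nsmul_eq_mul, mul_one,
    Finset.card_univ, Fintype.card_pi, Fintype.card_bool, Finset.prod_const, Fintype.card_fin]
  have : √(n : ℝ) * (n * 2 ^ n / n ^ 2) = 2 ^ n * (1 / √n) := by
    have h1 : √(n : ℝ) ^ 2 = n := Real.sq_sqrt hn0.le
    have h2 : 0 < √(n : ℝ) := Real.sqrt_pos.2 hn0
    field_simp
    exact h1
  rw [this]
  push_cast
  ring

/-- Chebyshev's inequality for the number of near-minimizers: if its mean is at least `6`, then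
fewer than `3` of them forces a deviation of at least half the mean. -/
lemma measure_lowConfigs {n : ℕ} (hn : 1 ≤ n) {a : ℝ} (ha : 0 ≤ a)
    (hM : 6 ≤ 2 ^ n * (gaussianReal 0 (n : NNReal)).real {x | |x| ≤ a * √n}) :
    (_root_.stdGaussian n).real {X | (lowConfigs n a X).card < 3} ≤
      4 * (Real.exp (a ^ 2) * (1 + 1 / √n) - 1 +
        2 / (2 ^ n * (gaussianReal 0 (n : NNReal)).real {x | |x| ≤ a * √n})) := by
  set p := (gaussianReal 0 (n : NNReal)).real {x | |x| ≤ a * √n} with hp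
  set M := 2 ^ n * p with hMdef
  set μ := _root_.stdGaussian n with hμ
  have hn0 : (0 : ℝ) < n := by exact_mod_cast hn
  let N : (Fin n → ℝ) → ℝ := fun X => ∑ s, (lowSet a s).indicator (fun _ => (1 : ℝ)) X
  have hNcard : ∀ X, N X = (lowConfigs n a X).card := by
    intro X
    classical
    simp only [N, lowConfigs, Set.indicator_apply, Finset.sum_boole]
  have hind : ∀ s, MemLp ((lowSet a s).indicator (fun _ : Fin n → ℝ => (1 : ℝ))) 2 μ := fun s =>
    memLp_indicator_const 2 (measurableSet_lowSet a s) 1 (Or.inr (measure_ne_top _ _))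
  have hN : MemLp N 2 μ := memLp_finsetSum _ fun s _ => hind s
  have hEN : μ[N] = M := by
    simp only [N]
    rw [integral_finsetSum _ fun s _ => (hind s).integrable one_le_two]
    simp [integral_indicator_const, measurableSet_lowSet, hμ, measure_lowSet, hMdef, hp]
  have hEN2 : μ[N ^ 2] = ∑ s, ∑ t, μ.real (lowSet a s ∩ lowSet a t) := by
    have e : N ^ 2 = fun X => ∑ s, ∑ t,
        (lowSet a s ∩ lowSet a t).indicator (fun _ => (1 : ℝ)) X := by
      ext X
      simp only [Pi.pow_apply, N, sq, Finset.sum_mul_sum]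
      refine Finset.sum_congr rfl fun s _ => Finset.sum_congr rfl fun t _ => ?_
      rw [← Set.inter_indicator_mul]
      simp only [mul_one]
    have hint : ∀ s t, Integrable
        ((lowSet a s ∩ lowSet a t).indicator (fun _ : Fin n → ℝ => (1 : ℝ))) μ := fun s t =>
      (integrable_const 1).indicator ((measurableSet_lowSet a s).inter (measurableSet_lowSet a t))
    rw [e, integral_finsetSum _ fun s _ => integrable_finsetSum _ fun t _ => hint s t]
    refine Finset.sum_congr rfl fun s _ => ?_
    rw [integral_finsetSum _ fun t _ => hint s t]
    refine Finset.sum_congr rfl fun t _ => ?_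
    rw [integral_indicator_const _ ((measurableSet_lowSet a s).inter (measurableSet_lowSet a t))]
    simp
  have hM0 : 0 < M := by linarith
  have hQ : 2 * a ^ 2 / Real.pi ≤ Real.exp (a ^ 2) * p ^ 2 := by
    have h := low_prob_lower hn a
    rw [← hp] at h
    have h1 : 0 ≤ 2 * a * ((√(2 * Real.pi))⁻¹ * Real.exp (-a ^ 2 / 2)) := by positivity
    have h2 := pow_le_pow_left₀ h1 h 2
    have e : (2 * a * ((√(2 * Real.pi))⁻¹ * Real.exp (-a ^ 2 / 2))) ^ 2 =
        2 * a ^ 2 / Real.pi * Real.exp (-a ^ 2) := by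
      have e2 : Real.exp (-a ^ 2 / 2) ^ 2 = Real.exp (-a ^ 2) := by
        rw [← Real.exp_nat_mul]; congr 1; push_cast; ring
      rw [mul_pow, mul_pow, mul_pow, e2, inv_pow, Real.sq_sqrt (by positivity)]
      field_simp
    rw [e] at h2
    calc 2 * a ^ 2 / Real.pi = Real.exp (a ^ 2) * (2 * a ^ 2 / Real.pi * Real.exp (-a ^ 2)) := by
          rw [mul_left_comm, ← Real.exp_add]; simp
      _ ≤ _ := by gcongr
  have hVar : Var[N; μ] ≤ M ^ 2 * (Real.exp (a ^ 2) * (1 + 1 / √n) - 1) + 2 * M := by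
    rw [variance_eq_sub hN, hEN, hEN2]
    have h1 := Finset.sum_le_sum fun s (_ : s ∈ (Finset.univ : Finset (Fin n → Bool))) =>
      sum_pair_prob hn ha s
    rw [← hp] at h1
    simp only [Finset.sum_const, nsmul_eq_mul, Finset.card_univ, Fintype.card_pi,
      Fintype.card_bool, Finset.prod_const, Fintype.card_fin] at h1
    push_cast at h1
    have h2 : 2 * a ^ 2 / Real.pi * (1 + 1 / √n) ≤ Real.exp (a ^ 2) * p ^ 2 * (1 + 1 / √n) := by
      gcongr
    have h3 := mul_le_mul_of_nonneg_left h2 (by positivity : (0 : ℝ) ≤ 2 ^ n * 2 ^ n)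
    have h4 : M ^ 2 * (Real.exp (a ^ 2) * (1 + 1 / √n) - 1) + 2 * M =
        2 ^ n * 2 ^ n * (Real.exp (a ^ 2) * p ^ 2 * (1 + 1 / √n)) + 2 ^ n * (2 * p) - M ^ 2 := by
      rw [hMdef]; ring
    rw [h4]
    linarith
  have hsub : {X | (lowConfigs n a X).card < 3} ⊆ {X | M / 2 ≤ |N X - μ[N]|} := by
    intro X hX
    simp only [Set.mem_ofPred_eq] at hX ⊢
    rw [hEN, hNcard]
    have : ((lowConfigs n a X).card : ℝ) ≤ 2 := by exact_mod_cast Nat.lt_succ_iff.1 hX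
    rw [abs_sub_comm]
    refine le_trans ?_ (le_abs_self _)
    linarith
  refine (measureReal_mono hsub).trans ?_
  have hc := meas_ge_le_variance_div_sq hN (half_pos hM0)
  refine (ENNReal.toReal_le_of_le_ofReal (div_nonneg (variance_nonneg _ _) (by positivity))
    hc).trans ?_
  rw [div_le_iff₀ (by positivity)]
  refine hVar.trans (le_of_eq ?_)
  field_simp
  ring

/-! ### The deterministic argument -/

lemma exists_spin {n : ℕ} {σ : Fin n → ℝ} (h : isCube σ) : ∃ s, spin s = σ := by
  classical
  refine ⟨fun i => decide (σ i = 1), ?_⟩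
  ext i
  rcases h i with h | h <;> simp [spin, h]; norm_num

lemma isCube_spin {n : ℕ} (s : Fin n → Bool) : isCube (spin s) := by
  intro i; unfold spin; cases s i <;> simp

lemma spin_injective {n : ℕ} : Function.Injective (spin (n := n)) := by
  intro s t h
  ext i
  have := congrFun h i
  unfold spin at this
  revert this
  cases s i <;> cases t i <;> norm_num

lemma ip_le_of_ne {n : ℕ} (s t : Fin n → Bool) (h : t ≠ s) :
    ip (spin s) (spin t) ≤ n - 2 := by
  rw [ip_agree]
  set A := Finset.univ.filter fun i => s i = t i with hA
  have hm : (Aᶜ).Nonempty := by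
    by_contra h'
    apply h
    ext i
    have : i ∉ Aᶜ := by rw [Finset.not_nonempty_iff_eq_empty.1 h']; simp
    simp only [hA, Finset.mem_compl, Finset.mem_filter, Finset.mem_univ, true_and, not_not] at this
    rw [this]
  have hm1 : (1 : ℝ) ≤ (Aᶜ).card := by exact_mod_cast hm.card_pos
  have hn : (A.card : ℝ) + (Aᶜ).card = n := by
    have := Finset.card_add_card_compl A
    rw [Fintype.card_fin] at this
    exact_mod_cast this
  linarith

/-- The deterministic part: if there are at least three near-minimizers at level `a` and no
`I₂`-type pair of near-minimizers at level `3a`, the free energy well inequality holds. -/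
lemma well_of_good {n : ℕ} (hn : 1 ≤ n) {a b ρ : ℝ} (hb : 0 ≤ b)
    (hba : (n : ℝ) ≤ b * a) {X σs : Fin n → ℝ} (hσ : isCube σs)
    (hmin : ∀ σ, isCube σ → |ip σs X| / √n ≤ |ip σ X| / √n)
    (hthree : ¬ (lowConfigs n a X).card < 3) (hbad : X ∉ badSet n (3 * a) ρ) :
    Real.exp (1 * b * a) * gibbsProb n b X (setI2 n ρ σs) ≤
      min (gibbsProb n b X (setI1 n ρ σs)) (gibbsProb n b X {σs}) := by
  classical
  have hn0 : (0 : ℝ) < n := by exact_mod_cast hn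
  have hsn : 0 < √(n : ℝ) := Real.sqrt_pos.2 hn0
  have ha : 0 < a := by
    by_contra h
    nlinarith
  obtain ⟨s0, rfl⟩ := exists_spin hσ
  have hlow : ∀ (c : ℝ) (s : Fin n → Bool), X ∈ lowSet c s ↔ |ip (spin s) X| / √n ≤ c := by
    intro c s
    rw [div_le_iff₀ hsn]; rfl
  have h3a : ∀ s : Fin n → Bool, X ∈ lowSet a s → X ∈ lowSet (3 * a) s := by
    intro s; rw [hlow, hlow]; intro h; linarith
  -- three near-minimizers leave one different from `± σ*`
  obtain ⟨t, ht, hts⟩ : ∃ t ∈ lowConfigs n a X, t ∉ ({s0, flipAll s0} : Finset (Fin n → Bool)) := by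
    apply Finset.exists_mem_notMem_of_card_lt_card
    have := Finset.card_le_two (a := s0) (b := flipAll s0)
    omega
  simp only [Finset.mem_insert, Finset.mem_singleton, not_or] at hts
  have htlow : X ∈ lowSet a t := by simpa [lowConfigs] using ht
  have hs0low : X ∈ lowSet a s0 := by
    rw [hlow] at htlow ⊢
    exact (hmin _ (isCube_spin t)).trans htlow
  have hne : flipAll t ≠ s0 := by
    rintro rfl
    exact hts.2 (by ext i; simp [flipAll])
  have htI : spin t ∈ setI1 n ρ (spin s0) := by
    refine ⟨isCube_spin t, ?_, ?_⟩
    · rw [le_div_iff₀ hn0]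
      by_contra! h
      have e : ip (spin (flipAll t)) (spin s0) = -ip (spin t) (spin s0) := ip_flipAll _ _
      refine hbad ⟨flipAll t, s0, by linarith, ip_le_of_ne _ _ hne.symm, h3a _ ?_, h3a _ hs0low⟩
      rw [hlow] at htlow ⊢
      rwa [ip_flipAll, abs_neg]
    · rw [div_le_iff₀ hn0]
      by_contra! h
      exact hbad ⟨t, s0, h.le, ip_le_of_ne _ _ (Ne.symm hts.1), h3a _ htlow, h3a _ hs0low⟩
  have hZ : 0 < gibbsZ n b X :=
    Finset.sum_pos (fun s _ => Real.exp_pos _) Finset.univ_nonempty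
  have hw0 : ∀ s, 0 ≤ gibbsWeight n b X s := fun s => (Real.exp_pos _).le
  have hwlow : ∀ s, X ∈ lowSet a s → Real.exp (-(b * a)) ≤ gibbsWeight n b X s := by
    intro s hs
    rw [hlow] at hs
    refine Real.exp_le_exp.2 ?_
    nlinarith
  have hge : ∀ (S : Set (Fin n → ℝ)) (s : Fin n → Bool), spin s ∈ S → X ∈ lowSet a s →
      Real.exp (-(b * a)) / gibbsZ n b X ≤ gibbsProb n b X S := by
    intro S s hsS hs
    unfold gibbsProb
    gcongr
    refine (hwlow s hs).trans ?_
    have := Finset.single_le_sum (s := (Finset.univ : Finset (Fin n → Bool)))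
      (f := fun s => if spin s ∈ S then gibbsWeight n b X s else 0)
      (fun i _ => by split_ifs; exacts [hw0 i, le_rfl]) (Finset.mem_univ s)
    simpa only [if_pos hsS] using this
  have hI2 : gibbsProb n b X (setI2 n ρ (spin s0)) ≤
      2 ^ n * Real.exp (-(3 * (b * a))) / gibbsZ n b X := by
    unfold gibbsProb
    gcongr
    calc _ ≤ ∑ s : Fin n → Bool, Real.exp (-(3 * (b * a))) := by
          refine Finset.sum_le_sum fun s _ => ?_
          split_ifs with hs
          · obtain ⟨_, h1, h2⟩ := hs
            rw [le_div_iff₀ hn0] at h1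
            rw [div_le_div_iff_of_pos_right hn0] at h2
            have hnl : ¬ X ∈ lowSet (3 * a) s := fun h =>
              hbad ⟨s, s0, h1, h2, h, h3a _ hs0low⟩
            rw [hlow, not_le] at hnl
            refine Real.exp_le_exp.2 ?_
            nlinarith
          · positivity
      _ = _ := by simp
  have hmain : Real.exp (1 * b * a) * gibbsProb n b X (setI2 n ρ (spin s0)) ≤
      Real.exp (-(b * a)) / gibbsZ n b X := by
    refine (mul_le_mul_of_nonneg_left hI2 (Real.exp_pos _).le).trans ?_
    rw [← mul_div_assoc]
    gcongr
    -- the entropy of `I₂` is absorbed by `n ≤ b * a`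
    have h2n : (2 : ℝ) ^ n ≤ Real.exp (b * a) := by
      calc (2 : ℝ) ^ n ≤ Real.exp 1 ^ n := by
            gcongr
            linarith [Real.add_one_le_exp (1 : ℝ)]
        _ = Real.exp n := by rw [← Real.exp_nat_mul, mul_one]
        _ ≤ _ := Real.exp_le_exp.2 hba
    calc Real.exp (1 * b * a) * (2 ^ n * Real.exp (-(3 * (b * a))))
        ≤ Real.exp (1 * b * a) * (Real.exp (b * a) * Real.exp (-(3 * (b * a)))) := by gcongr
      _ = _ := by rw [← Real.exp_add, ← Real.exp_add]; congr 1; ring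
  exact le_min (hmain.trans (hge _ t htI htlow)) (hmain.trans (hge _ s0 rfl hs0low))

/-! ### Asymptotics -/

/-- Choice of `ρ`: the exponential rate in `chernoff_card` can be made smaller than any `T > 1`. -/
lemma exists_overlap_threshold {T : ℝ} (hT : 1 < T) :
    ∃ ρ : ℝ, 0 < ρ ∧ ρ < 1 ∧ ∃ l : ℝ, 0 ≤ l ∧
      Real.exp (l * (1 - ρ)) * (1 + Real.exp (-(2 * l))) < T := by
  have h1 : Tendsto (fun l : ℝ => 1 + Real.exp (-(2 * l))) atTop (nhds (1 + 0)) :=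
    tendsto_const_nhds.add
      (Real.tendsto_exp_neg_atTop_nhds_zero.comp (tendsto_id.const_mul_atTop two_pos))
  rw [add_zero] at h1
  obtain ⟨l, hl, hl0⟩ := ((h1.eventually (gt_mem_nhds hT)).and (eventually_ge_atTop 0)).exists
  have h2 : Tendsto (fun ρ : ℝ => Real.exp (l * (1 - ρ)) * (1 + Real.exp (-(2 * l))))
      (nhdsWithin 1 (Set.Iio 1)) (nhds (1 + Real.exp (-(2 * l)))) := by
    have : Continuous (fun ρ : ℝ => Real.exp (l * (1 - ρ)) * (1 + Real.exp (-(2 * l)))) := by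
      fun_prop
    have h := (this.tendsto 1).mono_left (nhdsWithin_le_nhds (s := Set.Iio 1))
    simpa using h
  have h3 : ∀ᶠ ρ : ℝ in nhdsWithin 1 (Set.Iio 1), 0 < ρ :=
    nhdsWithin_le_nhds (lt_mem_nhds one_pos)
  obtain ⟨ρ, ⟨h, h0⟩, hlt⟩ :=
    (((h2.eventually (gt_mem_nhds hl)).and h3).and self_mem_nhdsWithin).exists
  exact ⟨ρ, h0, hlt, l, hl0, h⟩

lemma level_eq_pow (ε : ℝ) (n : ℕ) : (2 : ℝ) ^ (-(n : ℝ) * ε) = ((2 : ℝ) ^ (-ε)) ^ n := by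
  rw [← Real.rpow_mul_natCast zero_le_two]; congr 1; ring

lemma tendsto_measure_badSet {ε ρ l : ℝ} (hρ : 0 < ρ) (hl : 0 ≤ l)
    (hK : Real.exp (l * (1 - ρ)) * (1 + Real.exp (-(2 * l))) < 2 ^ (2 * ε - 1)) :
    Tendsto (fun n : ℕ => (_root_.stdGaussian n).real
      (badSet n (3 * (2 : ℝ) ^ (-(n : ℝ) * ε)) ρ)) atTop (nhds 0) := by
  set K := Real.exp (l * (1 - ρ)) * (1 + Real.exp (-(2 * l))) with hKdef
  have hK0 : 0 < K := by positivity
  obtain ⟨q, hq⟩ : ∃ q : ℝ, q = 2 * K * ((2 : ℝ) ^ (-ε)) ^ 2 := ⟨_, rfl⟩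
  have hq0 : 0 ≤ q := by rw [hq]; positivity
  have hq1 : q < 1 := by
    have e : 2 * (2 : ℝ) ^ (2 * ε - 1) * ((2 : ℝ) ^ (-ε)) ^ 2 = 1 := by
      nth_rewrite 1 [← Real.rpow_one 2]
      rw [← Real.rpow_mul_natCast zero_le_two, ← Real.rpow_add two_pos, ← Real.rpow_add two_pos,
        ← Real.rpow_zero 2]
      congr 1; push_cast; ring
    rw [hq, ← e]
    gcongr
  have hlim : Tendsto (fun n : ℕ => 18 / Real.pi * (q ^ n + n * q ^ n)) atTop (nhds 0) := by
    have := ((tendsto_pow_atTop_nhds_zero_of_lt_one hq0 hq1).add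
      (tendsto_self_mul_const_pow_of_lt_one hq0 hq1)).const_mul (18 / Real.pi)
    simpa using this
  refine squeeze_zero' (Eventually.of_forall fun n => measureReal_nonneg) ?_ hlim
  filter_upwards [eventually_ge_atTop 1] with n hn
  refine (measure_badSet hn (by positivity) hρ hl).trans ?_
  have hn1 : (1 : ℝ) ≤ n := by exact_mod_cast hn
  have hn0 : (0 : ℝ) ≤ n := by linarith
  have hsq : √(n : ℝ) ≤ n := Real.sqrt_le_iff.2 ⟨hn0, by nlinarith⟩
  rw [← hKdef, level_eq_pow]
  have e : q ^ n = 2 ^ n * K ^ n * (((2 : ℝ) ^ (-ε)) ^ n) ^ 2 := by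
    rw [hq, mul_pow, mul_pow, ← pow_mul, ← pow_mul, mul_comm 2 n]
  calc 2 ^ n * (K ^ n * (2 * (3 * ((2 : ℝ) ^ (-ε)) ^ n) ^ 2 / Real.pi * (1 + √n)))
      = 18 / Real.pi * (q ^ n * (1 + √n)) := by rw [e]; ring
    _ ≤ 18 / Real.pi * (q ^ n * (1 + n)) := by gcongr
    _ = _ := by ring

lemma tendsto_measure_lowConfigs {ε : ℝ} (hε : 1 / 2 < ε) (hε1 : ε < 1) :
    Tendsto (fun n : ℕ => (_root_.stdGaussian n).real
      {X | (lowConfigs n ((2 : ℝ) ^ (-(n : ℝ) * ε)) X).card < 3}) atTop (nhds 0) := by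
  set p : ℕ → ℝ := fun n =>
    (gaussianReal 0 (n : NNReal)).real {x | |x| ≤ (2 : ℝ) ^ (-(n : ℝ) * ε) * √n} with hp
  have hr0 : (0 : ℝ) ≤ 2 ^ (-ε) := by positivity
  have hr1 : (2 : ℝ) ^ (-ε) < 1 := Real.rpow_lt_one_of_one_lt_of_neg one_lt_two (by linarith)
  have hr2 : 1 < 2 * (2 : ℝ) ^ (-ε) := by
    rw [← Real.rpow_one_add' zero_le_two (by linarith)]
    exact Real.one_lt_rpow one_lt_two (by linarith)
  have ha : Tendsto (fun n : ℕ => (2 : ℝ) ^ (-(n : ℝ) * ε)) atTop (nhds 0) := by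
    simp_rw [level_eq_pow]
    exact tendsto_pow_atTop_nhds_zero_of_lt_one hr0 hr1
  -- the expected number of near-minimizers at level `2 ^ (-n ε)` is of order `2 ^ (n (1 - ε))`
  have hM : Tendsto (fun n : ℕ => 2 ^ n * p n) atTop atTop := by
    have h0 : Tendsto (fun n : ℕ => (2 * (2 : ℝ) ^ (-ε)) ^ n *
        (2 * ((√(2 * Real.pi))⁻¹ * Real.exp (-1 / 2)))) atTop atTop :=
      (tendsto_pow_atTop_atTop_of_one_lt hr2).atTop_mul_const (by positivity)
    refine tendsto_atTop_mono' _ ?_ h0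
    filter_upwards [eventually_ge_atTop 1] with n hn
    rw [mul_pow, mul_assoc]
    refine mul_le_mul_of_nonneg_left (le_trans ?_ (low_prob_lower hn _)) (by positivity)
    rw [level_eq_pow]
    set a := ((2 : ℝ) ^ (-ε)) ^ n
    have ha0 : 0 ≤ a := by positivity
    have ha1 : a ^ 2 ≤ 1 := pow_le_one₀ ha0 (pow_le_one₀ hr0 hr1.le)
    rw [← mul_assoc, mul_comm a 2]
    gcongr
  have hlim : Tendsto (fun n : ℕ => 4 * (Real.exp (((2 : ℝ) ^ (-(n : ℝ) * ε)) ^ 2) *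
      (1 + 1 / √(n : ℝ)) - 1 + 2 / (2 ^ n * p n))) atTop (nhds 0) := by
    have h1 : Tendsto (fun n : ℕ => Real.exp (((2 : ℝ) ^ (-(n : ℝ) * ε)) ^ 2)) atTop (nhds 1) := by
      have := (Real.continuous_exp.tendsto _).comp (ha.pow 2)
      simpa [Function.comp_def] using this
    have h2 : Tendsto (fun n : ℕ => 1 / √(n : ℝ)) atTop (nhds 0) := by
      simp only [one_div]
      exact (Real.tendsto_sqrt_atTop.comp tendsto_natCast_atTop_atTop).inv_tendsto_atTop
    have h3 : Tendsto (fun n : ℕ => 2 / (2 ^ n * p n)) atTop (nhds 0) :=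
      hM.const_div_atTop 2
    have := ((((h1.mul (h2.const_add 1)).sub_const 1).add h3).const_mul 4)
    simpa using this
  refine squeeze_zero' (Eventually.of_forall fun n => measureReal_nonneg) ?_ hlim
  filter_upwards [eventually_ge_atTop 1, hM.eventually_ge_atTop 6] with n hn h6
  exact measure_lowConfigs hn (by positivity) h6

/-- Free energy well: `I₂` carries exponentially less Gibbs mass than both `I₁`
and `I₃ = {σ*}`, w.h.p., for inverse temperatures `β_n ≥ n·2^{nε}`. -/
theorem free_energy_well (ε : ℝ) (hε : 1 / 2 < ε) (hε1 : ε < 1) :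
    ∃ ρ : ℝ, 0 < ρ ∧ ρ < 1 ∧ ∃ c : ℝ, 0 < c ∧
      ∀ β : ℕ → ℝ, (∀ n : ℕ, (n : ℝ) * (2 : ℝ) ^ ((n : ℝ) * ε) ≤ β n) →
      ∀ σstar : (n : ℕ) → (Fin n → ℝ) → (Fin n → ℝ),
        (∀ n X, isCube (σstar n X)) →
        (∀ n X σ, isCube σ →
          |ip (σstar n X) X| / Real.sqrt n ≤ |ip σ X| / Real.sqrt n) →
        (∀ n, Measurable (σstar n)) →
        Tendsto (fun n : ℕ =>
          stdGaussian n {X : Fin n → ℝ |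
            Real.exp (c * β n * (2 : ℝ) ^ (-(n : ℝ) * ε)) *
                gibbsProb n (β n) X (setI2 n ρ (σstar n X)) ≤
              min (gibbsProb n (β n) X (setI1 n ρ (σstar n X)))
                (gibbsProb n (β n) X {σstar n X})})
          atTop (nhds 1) := by
  -- `2 ^ (2 ε - 1) > 1` is the room left by the union bound over pairs at overlap `≥ ρ`
  obtain ⟨ρ, hρ0, hρ1, l, hl0, hK⟩ :=
    exists_overlap_threshold (Real.one_lt_rpow one_lt_two (by linarith : 0 < 2 * ε - 1))
  refine ⟨ρ, hρ0, hρ1, 1, one_pos, ?_⟩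
  intro β hβ σstar hcube hmin _
  have hlow := tendsto_measure_lowConfigs hε hε1
  have hbad := tendsto_measure_badSet hρ0 hl0 hK
  set S : (n : ℕ) → Set (Fin n → ℝ) := fun n => {X : Fin n → ℝ |
            Real.exp (1 * β n * (2 : ℝ) ^ (-(n : ℝ) * ε)) *
                gibbsProb n (β n) X (setI2 n ρ (σstar n X)) ≤
              min (gibbsProb n (β n) X (setI1 n ρ (σstar n X)))
                (gibbsProb n (β n) X {σstar n X})} with hS
  have hcompl : ∀ᶠ n : ℕ in atTop, 1 -
      ((_root_.stdGaussian n).real {X | (lowConfigs n ((2 : ℝ) ^ (-(n : ℝ) * ε)) X).card < 3} +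
        (_root_.stdGaussian n).real (badSet n (3 * (2 : ℝ) ^ (-(n : ℝ) * ε)) ρ)) ≤
      (_root_.stdGaussian n).real (S n) := by
    filter_upwards [eventually_ge_atTop 1] with n hn
    have hβa : (n : ℝ) ≤ β n * (2 : ℝ) ^ (-(n : ℝ) * ε) := by
      have h := mul_le_mul_of_nonneg_right (hβ n)
        (Real.rpow_nonneg zero_le_two (-(n : ℝ) * ε))
      rwa [mul_assoc, ← Real.rpow_add two_pos, neg_mul, add_neg_cancel, Real.rpow_zero,
        mul_one, ← neg_mul] at h
    have hβ0 : 0 ≤ β n := le_trans (by positivity) (hβ n)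
    have hcov : Set.univ ⊆ ({X | (lowConfigs n ((2 : ℝ) ^ (-(n : ℝ) * ε)) X).card < 3} ∪
        badSet n (3 * (2 : ℝ) ^ (-(n : ℝ) * ε)) ρ) ∪ S n := by
      intro X _
      by_contra hX
      simp only [Set.mem_union, not_or] at hX
      exact hX.2 (well_of_good hn hβ0 hβa (hcube n X) (hmin n X) hX.1.1 hX.1.2)
    have h1 := measureReal_mono (μ := _root_.stdGaussian n) hcov
    rw [probReal_univ] at h1
    have h2 := measureReal_union_le (μ := _root_.stdGaussian n)
      ({X | (lowConfigs n ((2 : ℝ) ^ (-(n : ℝ) * ε)) X).card < 3} ∪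
        badSet n (3 * (2 : ℝ) ^ (-(n : ℝ) * ε)) ρ) (S n)
    have h3 := measureReal_union_le (μ := _root_.stdGaussian n)
      {X | (lowConfigs n ((2 : ℝ) ^ (-(n : ℝ) * ε)) X).card < 3}
      (badSet n (3 * (2 : ℝ) ^ (-(n : ℝ) * ε)) ρ)
    linarith
  have hlim := (hlow.add hbad).const_sub 1
  rw [add_zero, sub_zero] at hlim
  have hreal : Tendsto (fun n => (_root_.stdGaussian n).real (S n)) atTop (nhds 1) :=
    tendsto_of_tendsto_of_tendsto_of_le_of_le' hlim tendsto_const_nhds hcompl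
      (Eventually.of_forall fun n => measureReal_le_one)
  have := ENNReal.tendsto_ofReal hreal
  rw [ENNReal.ofReal_one] at this
  refine this.congr fun n => ?_
  rw [measureReal_def, ENNReal.ofReal_toReal (measure_ne_top _ _)]
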